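/- arXiv:1208.2849 — 5 statements merged into one kernel-verified Lean document; each statement's English description precedes it below -/
import Mathlib

section
/- Let p be a multiple of four and let q be a power of two with q ≥ 8, and set k = pq/2. Then there exists a perfect coloring of the p×q toroidal grid using k colors in which every color is used exactly twice; in particular, for every color, the 8 colors appearing at the neighbors of its two occurrences are pairwise distinct. -/
/-!
A coloring in which every color occurs exactly twice is the same thing as a fixed-point-free
involution `σ` of the torus, exchanging the two cells of each color.  Such a coloring is perfect
as soon as `σ u` has no common neighbor with `u`, and `σ` never maps two adjacent cells to
adjacent cells (`exists_coloring`).  It remains to give such an involution.  Write `h` for the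
element `q / 2` of `ZMod q`, so that `2 h = 0`, `h ^ 2 = 0` and `h ∉ {0, -2}`; the idea is that a
vertical step `±1` becomes `±(1 + h)`, which is no longer a step.

* For `p ≥ 8` one takes `σ (x, y) = (x + p / 2, y + h (x + y))`.
* For `p = 4` and `q ≥ 16` one takes `σ (x, y) = (x + 2, y + h y + c x)`, where `c` takes the
  values `2, 4, -2, -4`.
* For `p = 4` and `q = 8` one takes `σ (x, y) = (x + 2, 2 x + 3 y + 1)`.
-/

/-- The four neighbors of a cell of the `p × q` toroidal grid:
down, up, left, right (coordinates taken modulo `p` and `q`). -/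
def nbrs {p q : ℕ} (u : ZMod p × ZMod q) : Fin 4 → ZMod p × ZMod q :=
  ![(u.1 - 1, u.2), (u.1 + 1, u.2), (u.1, u.2 - 1), (u.1, u.2 + 1)]

/-- A coloring of the `p × q` toroidal grid is perfect if for every color `c`,
the colors appearing at the neighbors of the cells colored `c` (listed with
multiplicity: one entry for each of the four neighbors of each occurrence of `c`)
are pairwise distinct. -/
def IsPerfect {p q : ℕ} {κ : Type*} (C : ZMod p × ZMod q → κ) : Prop :=
  ∀ u v : ZMod p × ZMod q, ∀ d e : Fin 4,
    C u = C v → C (nbrs u d) = C (nbrs v e) → u = v ∧ d = e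

/-- A fixed-point-free involution is the exchange map of a coloring with two cells per color. -/
lemma exists_two_to_one {V : Type*} [Fintype V] (σ : V → V) (hinv : ∀ u, σ (σ u) = u)
    (hfix : ∀ u, σ u ≠ u) :
    ∃ C : V → Fin (Fintype.card V / 2),
      (∀ c, {u | C u = c}.ncard = 2) ∧ ∀ u v, C u = C v → v = u ∨ v = σ u := by
  classical
  let S : Setoid V :=
    { r := fun u v => v = u ∨ v = σ u
      iseqv :=
        { refl := fun u => Or.inl rfl
          symm := by
            rintro u v (h | h)
            · exact Or.inl h.symm
            · right; rw [h, hinv]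
          trans := by
            rintro u v w (rfl | rfl) (rfl | rfl)
            · exact Or.inl rfl
            · exact Or.inr rfl
            · exact Or.inr rfl
            · left; rw [hinv] } }
  have hrel : ∀ u v, (Quotient.mk S u = Quotient.mk S v) ↔ (v = u ∨ v = σ u) :=
    fun u v => Quotient.eq (r := S)
  have hfib : ∀ u : V, {v | Quotient.mk S v = Quotient.mk S u} = {u, σ u} := by
    intro u
    ext v
    simp only [Set.mem_ofPred_eq, Set.mem_insert_iff, Set.mem_singleton_iff]
    rw [eq_comm, hrel]
  have hcard : Fintype.card V = Fintype.card (Quotient S) * 2 := by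
    have := Finset.card_eq_sum_card_fiberwise (s := (Finset.univ : Finset V))
      (t := (Finset.univ : Finset (Quotient S))) (f := Quotient.mk S) (by simp)
    rw [Finset.card_univ] at this
    rw [this, Finset.sum_const_nat (m := 2), Finset.card_univ]
    intro c _
    induction c using Quotient.inductionOn with
    | h u =>
      have h2 : ({u, σ u} : Finset V).card = 2 := Finset.card_pair (hfix u).symm
      rw [← h2]
      congr 1
      ext v
      have := Set.ext_iff.1 (hfib u) v
      simpa using this
  have e : Quotient S ≃ Fin (Fintype.card V / 2) :=
    Fintype.equivFinOfCardEq (by omega)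
  refine ⟨fun u => e (Quotient.mk S u), ?_, ?_⟩
  · intro c
    obtain ⟨a, rfl⟩ := e.surjective c
    induction a using Quotient.inductionOn with
    | h u =>
      simp only [e.injective.eq_iff]
      rw [hfib u, Set.ncard_pair (hfix u).symm]
  · intro u v h
    exact (hrel u v).1 (e.injective h)

/-- Adjacency is symmetric: `u` is a neighbor of each of its neighbors. -/
lemma nbrs_symm {p q : ℕ} (u : ZMod p × ZMod q) (d : Fin 4) : ∃ d', nbrs (nbrs u d) d' = u := by
  fin_cases d
  · exact ⟨1, by simp [nbrs]⟩
  · exact ⟨0, by simp [nbrs]⟩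
  · exact ⟨3, by simp [nbrs]⟩
  · exact ⟨2, by simp [nbrs]⟩

lemma natCast_zmod_ne_zero {n a : ℕ} (ha : 0 < a) (hn : a < n) : (a : ZMod n) ≠ 0 := by
  rw [Ne, ZMod.natCast_eq_zero_iff]
  exact Nat.not_dvd_of_pos_of_lt ha hn

lemma nbrs_injective {p q : ℕ} (hp : 3 ≤ p) (hq : 3 ≤ q) (u : ZMod p × ZMod q) :
    Function.Injective (nbrs u) := by
  have p1 := natCast_zmod_ne_zero (n := p) (a := 1) (by omega) (by omega)
  have p2 := natCast_zmod_ne_zero (n := p) (a := 2) (by omega) (by omega)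
  have q1 := natCast_zmod_ne_zero (n := q) (a := 1) (by omega) (by omega)
  have q2 := natCast_zmod_ne_zero (n := q) (a := 2) (by omega) (by omega)
  push_cast at p1 p2 q1 q2
  intro d e h
  fin_cases d <;> fin_cases e <;>
    simp only [nbrs, Prod.ext_iff, Fin.zero_eta, Fin.mk_one, Fin.reduceFinMk, Matrix.cons_val]
      at h <;> obtain ⟨hx, hy⟩ := h <;>
    first
      | rfl
      | exact (p1 (by linear_combination hx)).elim
      | exact (p1 (by linear_combination -hx)).elim
      | exact (p2 (by linear_combination hx)).elim
      | exact (p2 (by linear_combination -hx)).elim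
      | exact (q1 (by linear_combination hy)).elim
      | exact (q1 (by linear_combination -hy)).elim
      | exact (q2 (by linear_combination hy)).elim
      | exact (q2 (by linear_combination -hy)).elim

/-- An involution of the torus such that no cell shares a neighbor with its image, and no two
adjacent cells have adjacent images, yields a perfect coloring. -/
lemma exists_coloring {p q : ℕ} (hp : 3 ≤ p) (hq : 3 ≤ q)
    (σ : ZMod p × ZMod q → ZMod p × ZMod q) (hinv : ∀ u, σ (σ u) = u)
    (hdist : ∀ u d e, nbrs u d ≠ nbrs (σ u) e)
    (hadj : ∀ u d e, σ (nbrs u d) ≠ nbrs (σ u) e) :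
    ∃ C : ZMod p × ZMod q → Fin (p * q / 2),
      (∀ c : Fin (p * q / 2), {u | C u = c}.ncard = 2) ∧ IsPerfect C := by
  have : NeZero p := ⟨by omega⟩
  have : NeZero q := ⟨by omega⟩
  have hfix : ∀ u, σ u ≠ u := fun u h => hdist u 0 0 (by rw [h])
  have hcard : Fintype.card (ZMod p × ZMod q) = p * q := by simp [ZMod.card]
  have hex := exists_two_to_one σ hinv hfix
  rw [hcard] at hex
  obtain ⟨C, hC, hrel⟩ := hex
  refine ⟨C, hC, ?_⟩
  intro u v d e huv hde
  rcases hrel _ _ huv with rfl | rfl <;> rcases hrel _ _ hde with h | h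
  · exact ⟨rfl, (nbrs_injective hp hq v h).symm⟩
  -- two neighbors of `v` exchanged by `σ` would have `v` as a common neighbor
  · obtain ⟨d', hd'⟩ := nbrs_symm v d
    obtain ⟨e', he'⟩ := nbrs_symm v e
    exact (hdist (nbrs v d) d' e' (by rw [hd', ← h, he'])).elim
  · exact (hdist _ _ _ h.symm).elim
  · exact (hadj _ _ _ h.symm).elim

lemma half_mul_eq {q : ℕ} [NeZero q] (h : ZMod q) (h2 : h + h = 0) (y : ZMod q) :
    h * y = 0 ∨ h * y = h := by
  obtain ⟨n, rfl⟩ := ZMod.natCast_zmod_surjective y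
  rcases Nat.even_or_odd' n with ⟨k, rfl | rfl⟩
  · left; push_cast; linear_combination (k : ZMod q) * h2
  · right; push_cast; linear_combination (k : ZMod q) * h2

/-- The case `p ≥ 8`, with the involution `(x, y) ↦ (x + p / 2, y + h (x + y))`.  Since `h` has
order two, `x ↦ h x` makes sense as an additive map `φ` from `ZMod p` to `ZMod q`. -/
lemma case_large (m n : ℕ) (hm : 2 ≤ m) (hn : 2 ≤ n) :
    ∃ C : ZMod (4 * m) × ZMod (4 * n) → Fin (4 * m * (4 * n) / 2),
      (∀ c : Fin (4 * m * (4 * n) / 2), {u | C u = c}.ncard = 2) ∧ IsPerfect C := by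
  have : NeZero (4 * m) := ⟨by omega⟩
  obtain ⟨h, hh⟩ : ∃ h : ZMod (4 * n), h = 2 * n := ⟨_, rfl⟩
  have hq0 : (4 * n : ZMod (4 * n)) = 0 := by exact_mod_cast ZMod.natCast_self (4 * n)
  have h2 : h + h = 0 := by rw [hh]; linear_combination hq0
  have hsq : h * h = 0 := by rw [hh]; linear_combination n * hq0
  have h0 : h ≠ 0 := by
    rw [hh]; exact_mod_cast natCast_zmod_ne_zero (a := 2 * n) (by omega) (by omega)
  have h02 : h + 2 ≠ 0 := by
    rw [hh]; exact_mod_cast natCast_zmod_ne_zero (a := 2 * n + 2) (by omega) (by omega)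
  have p1 : (1 : ZMod (4 * m)) ≠ 0 := by
    exact_mod_cast natCast_zmod_ne_zero (n := 4 * m) (a := 1) (by omega) (by omega)
  obtain ⟨g, hg⟩ : ∃ g : ZMod (4 * m), g = 2 * m := ⟨_, rfl⟩
  have hp0 : (4 * m : ZMod (4 * m)) = 0 := by exact_mod_cast ZMod.natCast_self (4 * m)
  have g2 : g + g = 0 := by rw [hg]; linear_combination hp0
  have g0 : g ≠ 0 := by
    rw [hg]; exact_mod_cast natCast_zmod_ne_zero (a := 2 * m) (by omega) (by omega)
  have g01 : g + 1 ≠ 0 := by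
    rw [hg]; exact_mod_cast natCast_zmod_ne_zero (a := 2 * m + 1) (by omega) (by omega)
  have g02 : g + 2 ≠ 0 := by
    rw [hg]; exact_mod_cast natCast_zmod_ne_zero (a := 2 * m + 2) (by omega) (by omega)
  obtain ⟨φ, hφ⟩ : ∃ φ : ZMod (4 * m) →+ ZMod (4 * n), φ 1 = h := by
    refine ⟨ZMod.lift (4 * m) ⟨zmultiplesHom _ h, ?_⟩, ?_⟩
    · simp only [zmultiplesHom_apply, zsmul_eq_mul]
      push_cast
      linear_combination (2 * m : ZMod (4 * n)) * h2
    · have := ZMod.lift_coe (4 * m) (A := ZMod (4 * n)) ⟨zmultiplesHom _ h, by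
        simp only [zmultiplesHom_apply, zsmul_eq_mul]
        push_cast
        linear_combination (2 * m : ZMod (4 * n)) * h2⟩ 1
      simpa using this
  have hφn : ∀ k : ℕ, φ k = k * h := by
    intro k
    rw [← nsmul_one, map_nsmul, hφ, nsmul_eq_mul]
  have hφ2 : ∀ x, φ x + φ x = 0 := by
    intro x
    obtain ⟨k, rfl⟩ := ZMod.natCast_zmod_surjective x
    rw [hφn]; linear_combination k * h2
  have hφh : ∀ x, h * φ x = 0 := by
    intro x
    obtain ⟨k, rfl⟩ := ZMod.natCast_zmod_surjective x
    rw [hφn]; linear_combination k * hsq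
  have hφg : φ g = 0 := by
    have := hφn (2 * m)
    push_cast at this
    rw [hg, this]; linear_combination m * h2
  refine exists_coloring (by omega) (by omega)
    (fun u => (u.1 + g, u.2 + φ u.1 + h * u.2)) ?_ ?_ ?_
  · rintro ⟨x, y⟩
    ext
    · simp only; linear_combination g2
    · simp only [map_add, hφg]
      linear_combination hφ2 x + y * h2 + hφh x + y * hsq
  · rintro ⟨x, y⟩ d e hde
    fin_cases d <;> fin_cases e <;>
      simp only [nbrs, Prod.ext_iff, Fin.zero_eta, Fin.mk_one, Fin.reduceFinMk, Matrix.cons_val]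
        at hde <;> obtain ⟨hx, hy⟩ := hde <;>
      first
        | exact g0 (by linear_combination -hx)
        | exact g0 (by linear_combination g2 + hx)
        | exact g01 (by linear_combination -hx)
        | exact g01 (by linear_combination g2 + hx)
        | exact g02 (by linear_combination -hx)
        | exact g02 (by linear_combination g2 + hx)
  · rintro ⟨x, y⟩ d e hde
    fin_cases d <;> fin_cases e <;>
      simp only [nbrs, Prod.ext_iff, map_add, map_sub, hφ, Fin.zero_eta, Fin.mk_one, Fin.reduceFinMk,
        Matrix.cons_val] at hde <;> obtain ⟨hx, hy⟩ := hde <;>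
      first
        | exact p1 (by linear_combination hx)
        | exact p1 (by linear_combination -hx)
        | exact h0 (by linear_combination hy)
        | exact h0 (by linear_combination -hy)
        | exact h02 (by linear_combination hy)
        | exact h02 (by linear_combination -hy)

/-- The case `p = 4`, `q ≥ 16`.  The values `2, 4, -2, -4` of the shift `c` in the four rows make
`c x + c (x + 2)` vanish, while `c x` and `c (x + 1) - c x` stay nonzero, the former even
modulo `q / 2`. -/
lemma case_four (n : ℕ) (hn : 4 ≤ n) :
    ∃ C : ZMod 4 × ZMod (4 * n) → Fin (4 * (4 * n) / 2),
      (∀ c : Fin (4 * (4 * n) / 2), {u | C u = c}.ncard = 2) ∧ IsPerfect C := by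
  have : NeZero (4 * n) := ⟨by omega⟩
  obtain ⟨h, hh⟩ : ∃ h : ZMod (4 * n), h = 2 * n := ⟨_, rfl⟩
  have hq0 : (4 * n : ZMod (4 * n)) = 0 := by exact_mod_cast ZMod.natCast_self (4 * n)
  have h2 : h + h = 0 := by rw [hh]; linear_combination hq0
  have hsq : h * h = 0 := by rw [hh]; linear_combination n * hq0
  have h0 : h ≠ 0 := by
    rw [hh]; exact_mod_cast natCast_zmod_ne_zero (a := 2 * n) (by omega) (by omega)
  have h02 : h + 2 ≠ 0 := by
    rw [hh]; exact_mod_cast natCast_zmod_ne_zero (a := 2 * n + 2) (by omega) (by omega)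
  have h04 : h + 4 ≠ 0 := by
    rw [hh]; exact_mod_cast natCast_zmod_ne_zero (a := 2 * n + 4) (by omega) (by omega)
  have q2 : (2 : ZMod (4 * n)) ≠ 0 := by
    exact_mod_cast natCast_zmod_ne_zero (n := 4 * n) (a := 2) (by omega) (by omega)
  have q4 : (4 : ZMod (4 * n)) ≠ 0 := by
    exact_mod_cast natCast_zmod_ne_zero (n := 4 * n) (a := 4) (by omega) (by omega)
  have q6 : (6 : ZMod (4 * n)) ≠ 0 := by
    exact_mod_cast natCast_zmod_ne_zero (n := 4 * n) (a := 6) (by omega) (by omega)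
  obtain ⟨c, hc0, hc1, hc2, hc3⟩ : ∃ c : ZMod 4 → ZMod (4 * n),
      c 0 = 2 ∧ c 1 = 4 ∧ c 2 = -2 ∧ c 3 = -4 :=
    ⟨![2, 4, -2, -4], rfl, rfl, rfl, rfl⟩
  have hcases : ∀ x : ZMod 4, x = 0 ∨ x = 1 ∨ x = 2 ∨ x = 3 := by decide
  have e20 : (0 + 2 : ZMod 4) = 2 := by decide
  have e21 : (1 + 2 : ZMod 4) = 3 := by decide
  have e22 : (2 + 2 : ZMod 4) = 0 := by decide
  have e23 : (3 + 2 : ZMod 4) = 1 := by decide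
  have e10 : (0 + 1 : ZMod 4) = 1 := by decide
  have e11 : (1 + 1 : ZMod 4) = 2 := by decide
  have e12 : (2 + 1 : ZMod 4) = 3 := by decide
  have e13 : (3 + 1 : ZMod 4) = 0 := by decide
  have hcc : ∀ x, c x + c (x + 2) = 0 := by
    intro x
    rcases hcases x with rfl | rfl | rfl | rfl <;>
      simp only [e20, e21, e22, e23, hc0, hc1, hc2, hc3] <;> ring
  have hch : ∀ x, h * c x = 0 := by
    intro x
    rcases hcases x with rfl | rfl | rfl | rfl <;>
      simp only [hc0, hc1, hc2, hc3]
    · linear_combination h2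
    · linear_combination 2 * h2
    · linear_combination -h2
    · linear_combination -2 * h2
  have hstep : ∀ x, c (x + 1) ≠ c x := by
    intro x hx
    rcases hcases x with rfl | rfl | rfl | rfl <;>
      simp only [e10, e11, e12, e13, hc0, hc1, hc2, hc3] at hx
    · exact q2 (by linear_combination hx)
    · exact q6 (by linear_combination -hx)
    · exact q2 (by linear_combination -hx)
    · exact q6 (by linear_combination hx)
  have hdisp : ∀ x y, c x + h * y ≠ 0 := by
    intro x y hx
    rcases half_mul_eq h h2 y with hy | hy <;> rw [hy] at hx <;>
    rcases hcases x with rfl | rfl | rfl | rfl <;>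
      simp only [hc0, hc1, hc2, hc3] at hx
    · exact q2 (by linear_combination hx)
    · exact q4 (by linear_combination hx)
    · exact q2 (by linear_combination -hx)
    · exact q4 (by linear_combination -hx)
    · exact h02 (by linear_combination hx)
    · exact h04 (by linear_combination hx)
    · exact h02 (by linear_combination h2 - hx)
    · exact h04 (by linear_combination h2 - hx)
  have hstep' : ∀ x, c (x - 1) ≠ c x := by
    intro x hx
    exact hstep (x - 1) (by rw [sub_add_cancel, hx])
  -- rows that differ: `f` for neighbors of `u` and of `σ u`, `k` for images under `σ`
  -- of neighbors of `u` and neighbors of `σ u`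
  have f1 : ∀ x : ZMod 4, x - 1 ≠ x + 2 - 1 := by decide
  have f2 : ∀ x : ZMod 4, x + 1 ≠ x + 2 + 1 := by decide
  have f3 : ∀ x : ZMod 4, x - 1 ≠ x + 2 := by decide
  have f4 : ∀ x : ZMod 4, x + 1 ≠ x + 2 := by decide
  have f5 : ∀ x : ZMod 4, x ≠ x + 2 := by decide
  have f6 : ∀ x : ZMod 4, x ≠ x + 2 - 1 := by decide
  have f7 : ∀ x : ZMod 4, x ≠ x + 2 + 1 := by decide
  have k1 : ∀ x : ZMod 4, x - 1 + 2 ≠ x + 2 + 1 := by decide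
  have k2 : ∀ x : ZMod 4, x + 1 + 2 ≠ x + 2 - 1 := by decide
  have k3 : ∀ x : ZMod 4, x - 1 + 2 ≠ x + 2 := by decide
  have k4 : ∀ x : ZMod 4, x + 1 + 2 ≠ x + 2 := by decide
  have k5 : ∀ x : ZMod 4, x + 2 ≠ x + 2 - 1 := by decide
  have k6 : ∀ x : ZMod 4, x + 2 ≠ x + 2 + 1 := by decide
  refine exists_coloring (by omega) (by omega)
    (fun u => (u.1 + 2, u.2 + c u.1 + h * u.2)) ?_ ?_ ?_
  · rintro ⟨x, y⟩
    ext
    · simp only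
      revert x; decide
    · simp only
      linear_combination hcc x + y * h2 + hch x + y * hsq
  · rintro ⟨x, y⟩ d e hde
    have hd := hdisp x y
    fin_cases d <;> fin_cases e <;>
      simp only [nbrs, Prod.ext_iff, Fin.zero_eta, Fin.mk_one, Fin.reduceFinMk, Matrix.cons_val]
        at hde <;> obtain ⟨hx, hy⟩ := hde <;>
      first
        | exact f1 x hx | exact f2 x hx | exact f3 x hx | exact f4 x hx | exact f5 x hx
        | exact f6 x hx | exact f7 x hx
        | exact hd (by linear_combination -hy)
  · rintro ⟨x, y⟩ d e hde
    have hs := hstep x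
    have hs' := hstep' x
    fin_cases d <;> fin_cases e <;>
      simp only [nbrs, Prod.ext_iff, Fin.zero_eta, Fin.mk_one, Fin.reduceFinMk, Matrix.cons_val]
        at hde <;> obtain ⟨hx, hy⟩ := hde <;>
      first
        | exact k1 x hx | exact k2 x hx | exact k3 x hx | exact k4 x hx | exact k5 x hx
        | exact k6 x hx
        | exact hs (by linear_combination hy)
        | exact hs' (by linear_combination hy)
        | exact h0 (by linear_combination hy)
        | exact h0 (by linear_combination -hy)
        | exact h02 (by linear_combination hy)
        | exact h02 (by linear_combination -hy)

set_option maxRecDepth 100000 in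
lemma case_four_eight :
    ∃ C : ZMod 4 × ZMod 8 → Fin (4 * 8 / 2),
      (∀ c : Fin (4 * 8 / 2), {u | C u = c}.ncard = 2) ∧ IsPerfect C := by
  refine exists_coloring (by omega) (by omega)
    (fun u => (u.1 + 2, 2 * (u.1.val : ZMod 8) + 3 * u.2 + 1)) ?_ ?_ ?_
  · decide
  · decide
  · decide

/-- Let `p` be a (positive) multiple of four and `q ≥ 8` a power of two, and set
`k = p*q/2`.  Then there is a perfect coloring of the `p × q` toroidal grid with
`k` colors in which every color is used exactly twice. -/
theorem stmt_0 (p q : ℕ) (hp4 : 4 ∣ p) (hp0 : 0 < p)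
    (hq : ∃ m : ℕ, q = 2 ^ m) (hq8 : 8 ≤ q) :
    ∃ C : ZMod p × ZMod q → Fin (p * q / 2),
      (∀ c : Fin (p * q / 2), {u | C u = c}.ncard = 2) ∧ IsPerfect C := by
  obtain ⟨m, rfl⟩ := hp4
  have h8 : 8 ∣ q := by
    obtain ⟨k, rfl⟩ := hq
    have hk : 3 ≤ k := by
      by_contra hk
      have : k ≤ 2 := by omega
      have : 2 ^ k ≤ 2 ^ 2 := Nat.pow_le_pow_right (by norm_num) this
      omega
    exact pow_dvd_pow 2 hk
  obtain ⟨n, rfl⟩ : 4 ∣ q := Dvd.dvd.trans (by norm_num) h8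
  rcases Nat.lt_or_ge m 2 with hm | hm
  · obtain rfl : m = 1 := by omega
    rcases Nat.lt_or_ge n 4 with hn | hn
    · obtain rfl : n = 2 := by omega
      exact case_four_eight
    · exact case_four n hn
  · exact case_large m n hm (by omega)
end

section
/- Let q be a power of two with q ≥ 8 and let Ω be any set with q elements. Then there exists a nice pair of permutations of Ω. -/
/-!
Identify `Ω` with `ZMod q`, put `h = q / 2`, and take `σ₁ = id` and `σ₂ = π`, where
`π x = (1 + h) * x + 2`. As `8 ∣ q`, the element `h` is a nonzero multiple of `4` with
`h * h = 0` and `2 * h = 0`, so `π (π x) = x + 4`; in particular `π` is a bijection.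

Write `a = π j`. The six neighbors of `a` are `a - 1, a + 1, π a, a - (1 + h), a + (1 + h), j`,
and modulo `4` they are `j + 1, j + 3, j, j + 1, j + 3, j`. The three remaining coincidences are
excluded by `h ≠ 0` (twice) and by `π a = π (π j) = j + 4 ≠ j`.
-/

/-- A pair `(σ₁, σ₂)` of maps from `ZMod q` to `Ω`, viewed as a `2 × q` array whose
row `r` lists `σᵣ 0, …, σᵣ (q-1)` with positions taken cyclically, is a *nice pair*
if for every `a ∈ Ω` the six neighbors of the two occurrences of `a`
(`σ₁ (i-1), σ₁ (i+1), σ₂ i` where `σ₁ i = a`, and `σ₂ (j-1), σ₂ (j+1), σ₁ j`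
where `σ₂ j = a`) are pairwise distinct. -/
def IsNicePair {q : ℕ} {Ω : Type*} (σ₁ σ₂ : ZMod q → Ω) : Prop :=
  ∀ (a : Ω) (i j : ZMod q), σ₁ i = a → σ₂ j = a →
    List.Pairwise (· ≠ ·) [σ₁ (i - 1), σ₁ (i + 1), σ₂ i, σ₂ (j - 1), σ₂ (j + 1), σ₁ j]

/-- The affine map `x ↦ (1 + h) * x + 2`, which serves as the second row for `h = q / 2`. -/
def halfShift {q : ℕ} (h x : ZMod q) : ZMod q := (1 + h) * x + 2

theorem halfShift_halfShift {q : ℕ} {h : ZMod q} (hh : h * h = 0) (h2 : 2 * h = 0)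
    (x : ZMod q) : halfShift h (halfShift h x) = x + 4 := by
  unfold halfShift
  linear_combination x * hh + (x + 1) * h2

theorem bijective_halfShift {q : ℕ} {h : ZMod q} (hh : h * h = 0) (h2 : 2 * h = 0) :
    Function.Bijective (halfShift h) := by
  refine ⟨fun x y hxy => ?_, fun y => ⟨halfShift h (y - 4), ?_⟩⟩
  · have := congrArg (halfShift h) hxy
    simpa [halfShift_halfShift hh h2] using this
  · rw [halfShift_halfShift hh h2, sub_add_cancel]

/-- Niceness of the pair `(id, halfShift h)`, where `φ` is reduction modulo `4`. -/
theorem isNicePair_halfShift {q : ℕ} {h : ZMod q} (hh : h * h = 0) (h2 : 2 * h = 0)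
    (h0 : h ≠ 0) (h4 : (4 : ZMod q) ≠ 0) (φ : ZMod q →+* ZMod 4) (hφ : φ h = 0) :
    IsNicePair id (halfShift h) := by
  intro a i j hi hj
  obtain rfl : i = halfShift h j := hi.trans hj.symm
  have key : ∀ x y : ZMod q, φ x ≠ φ y → x ≠ y := fun x y hxy e => hxy (congrArg φ e)
  have hs : ∀ x, φ (halfShift h x) = φ x + 2 := fun x => by
    simp [halfShift, hφ, map_ofNat φ 2]
  -- the pairs of neighbors that differ modulo `4`, in terms of `y = φ j`
  have dec : ∀ y : ZMod 4, y + 2 - 1 ≠ y + 2 + 1 ∧ y + 2 - 1 ≠ y + 2 + 2 ∧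
      y + 2 - 1 ≠ y + 1 + 2 ∧ y + 2 - 1 ≠ y ∧ y + 2 + 1 ≠ y + 2 + 2 ∧
      y + 2 + 1 ≠ y - 1 + 2 ∧ y + 2 + 1 ≠ y ∧ y + 2 + 2 ≠ y - 1 + 2 ∧
      y + 2 + 2 ≠ y + 1 + 2 ∧ y - 1 + 2 ≠ y + 1 + 2 ∧ y - 1 + 2 ≠ y ∧ y + 1 + 2 ≠ y := by
    decide
  obtain ⟨d1, d2, d3, d4, d5, d6, d7, d8, d9, d10, d11, d12⟩ := dec (φ j)
  have e1 : halfShift h j - 1 ≠ halfShift h (j - 1) := fun e =>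
    h0 (by unfold halfShift at e; linear_combination e)
  have e2 : halfShift h j + 1 ≠ halfShift h (j + 1) := fun e =>
    h0 (by unfold halfShift at e; linear_combination -e)
  have e3 : halfShift h (halfShift h j) ≠ j := fun e =>
    h4 (by rw [halfShift_halfShift hh h2] at e; linear_combination e)
  simp only [List.pairwise_cons, List.mem_cons, List.not_mem_nil, or_false, id, forall_eq_or_imp,
    forall_eq, List.Pairwise.nil, and_true, false_imp_iff, implies_true]
  refine ⟨⟨key _ _ ?_, key _ _ ?_, e1, key _ _ ?_, key _ _ ?_⟩,
    ⟨key _ _ ?_, key _ _ ?_, e2, key _ _ ?_⟩, ⟨key _ _ ?_, key _ _ ?_, e3⟩,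
    ⟨key _ _ ?_, key _ _ ?_⟩, key _ _ ?_⟩ <;>
    simpa only [map_add, map_sub, map_one, hs]

/-- If `q ≥ 8` is a power of two and `Ω` has `q` elements, then there exists a nice
pair of permutations of `Ω`. -/
theorem stmt_1 {Ω : Type*} [Fintype Ω] (q : ℕ) (hq : ∃ m : ℕ, q = 2 ^ m)
    (hq8 : 8 ≤ q) (hcard : Fintype.card Ω = q) :
    ∃ σ₁ σ₂ : ZMod q → Ω,
      Function.Bijective σ₁ ∧ Function.Bijective σ₂ ∧ IsNicePair σ₁ σ₂ := by
  obtain ⟨m, rfl⟩ := hq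
  have hm : 3 ≤ m := by
    by_contra! hlt
    have := Nat.pow_lt_pow_right (a := 2) (by norm_num) hlt
    omega
  obtain ⟨n, rfl⟩ := Nat.exists_eq_add_of_le hm
  obtain ⟨k, hk⟩ : ∃ k, 2 ^ (3 + n) = 8 * k := ⟨2 ^ n, by rw [pow_add]; norm_num⟩
  generalize 2 ^ (3 + n) = q at *
  subst hk
  have : NeZero (8 * k) := ⟨by omega⟩
  let e : ZMod (8 * k) ≃ Ω := Fintype.equivOfCardEq (by rw [ZMod.card, hcard])
  have hz : ((8 * k : ℕ) : ZMod (8 * k)) = 0 := ZMod.natCast_self _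
  push_cast at hz
  have hh : (4 * k : ZMod (8 * k)) * (4 * k) = 0 := by
    linear_combination 2 * (k : ZMod (8 * k)) * hz
  have h2 : 2 * (4 * k : ZMod (8 * k)) = 0 := by linear_combination hz
  have h0 : (4 * k : ZMod (8 * k)) ≠ 0 := by
    intro h
    have := (ZMod.natCast_eq_zero_iff (4 * k) (8 * k)).1 (by exact_mod_cast h)
    have := Nat.le_of_dvd (by omega) this
    omega
  have h4 : (4 : ZMod (8 * k)) ≠ 0 := by
    intro h
    have := (ZMod.natCast_eq_zero_iff 4 (8 * k)).1 (by exact_mod_cast h)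
    have := Nat.le_of_dvd (by omega) this
    omega
  let φ : ZMod (8 * k) →+* ZMod 4 := ZMod.castHom (⟨2 * k, by ring⟩ : 4 ∣ 8 * k) (ZMod 4)
  have hφ : φ (4 * k) = 0 := by
    rw [map_mul, map_ofNat, show (OfNat.ofNat 4 : ZMod 4) = 0 from rfl, zero_mul]
  refine ⟨e, e ∘ halfShift (4 * k), e.bijective, e.bijective.comp (bijective_halfShift hh h2), ?_⟩
  intro a i j hi hj
  have := isNicePair_halfShift hh h2 h0 h4 φ hφ (e.symm a) i j
    (by simp [← hi]) (by simp [← hj])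
  exact this.map e (fun _ _ hxy => e.injective.ne hxy)
end

section
/- Let q be a power of two with q ≥ 8 and take Ω = ℤ/qℤ. Let σ₁ be the identity map on ℤ/qℤ and define σ₂ : ℤ/qℤ → ℤ/qℤ by σ₂(i) = 5i + 2. Then σ₂ is a bijection of ℤ/qℤ and (σ₁, σ₂) is a nice pair of permutations of ℤ/qℤ. -/
/-- The six neighbors of `5 k + 2` are already pairwise distinct modulo `8`. -/
lemma neighbors_mod_eight : ∀ k : ZMod 8, List.Pairwise (· ≠ ·)
    [5 * k + 2 - 1, 5 * k + 2 + 1, 5 * (5 * k + 2) + 2,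
      5 * (k - 1) + 2, 5 * (k + 1) + 2, k] := by
  decide

/-- For `q ≥ 8` a power of two, the identity map and `i ↦ 5 i + 2` form a nice pair
of permutations of `ZMod q`; in particular `i ↦ 5 i + 2` is a bijection. -/
theorem stmt_2 (q : ℕ) (hq : ∃ m : ℕ, q = 2 ^ m) (hq8 : 8 ≤ q) :
    Function.Bijective (fun i : ZMod q => 5 * i + 2) ∧
      IsNicePair (id : ZMod q → ZMod q) (fun i : ZMod q => 5 * i + 2) := by
  obtain ⟨m, rfl⟩ := hq
  have h8 : 8 ∣ 2 ^ m := by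
    have hm : 3 ≤ m := (Nat.pow_le_pow_iff_right (by norm_num : 1 < 2)).1 hq8
    exact pow_dvd_pow 2 hm
  constructor
  · have h5 : IsUnit (5 : ZMod (2 ^ m)) := by
      have h := (ZMod.isUnit_iff_coprime 5 (2 ^ m)).2 (Nat.Coprime.pow_right m (by norm_num))
      exact_mod_cast h
    exact (AddGroup.addRight_bijective (2 : ZMod (2 ^ m))).comp
      (IsUnit.isUnit_iff_mulLeft_bijective.1 h5)
  · rintro a i j rfl hj
    simp only [id] at hj ⊢
    subst hj
    let f := ZMod.castHom h8 (ZMod 8)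
    refine List.Pairwise.of_map (S := (· ≠ ·)) f (fun x y hxy h => hxy (congrArg f h)) ?_
    simpa only [List.map_cons, List.map_nil, map_add, map_sub, map_mul, map_one, map_ofNat]
      using neighbors_mod_eight (f j)
end

section
/- Let p ≥ 4 be even and let q be a power of two with q ≥ 8. For a cell (x,y) of the p×q toroidal grid, let x̄ ∈ {0,…,p−1} and ȳ ∈ {0,…,q−1} be the canonical representatives of x and y, and define the coloring C(x,y) = ⌊x̄/2⌋·q + ȳ if x̄ is even, and C(x,y) = ⌊x̄/2⌋·q + ((5ȳ+2) mod q) if x̄ is odd, taking values in {0,…,pq/2−1}. Then every color in {0,…,pq/2−1} is used exactly twice and C is a perfect coloring of the p×q toroidal grid. -/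
/-- The mod-coloring: a cell `(x, y)` with canonical representatives
`x̄ ∈ {0, …, p-1}` and `ȳ ∈ {0, …, q-1}` receives color `⌊x̄/2⌋·q + ȳ` if `x̄` is
even, and `⌊x̄/2⌋·q + ((5 ȳ + 2) mod q)` if `x̄` is odd. -/
def modColor (p q : ℕ) (u : ZMod p × ZMod q) : ℕ :=
  if u.1.val % 2 = 0 then u.1.val / 2 * q + u.2.val
  else u.1.val / 2 * q + (5 * u.2.val + 2) % q

/-- The residue modulo `q` that, together with the block `⌊x̄/2⌋`, encodes the color of a cell. -/
def colorResidue {p q : ℕ} (u : ZMod p × ZMod q) : ZMod q :=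
  if u.1.val % 2 = 0 then u.2 else 5 * u.2 + 2

theorem modColor_eq {p q : ℕ} [NeZero q] (u : ZMod p × ZMod q) :
    modColor p q u = u.1.val / 2 * q + (colorResidue u).val := by
  unfold modColor colorResidue
  split_ifs
  · rfl
  · rw [← ZMod.val_natCast]
    push_cast
    rw [ZMod.natCast_zmod_val]

theorem modColor_eq_iff {p q : ℕ} [NeZero q] (u v : ZMod p × ZMod q) :
    modColor p q u = modColor p q v ↔
      u.1.val / 2 = v.1.val / 2 ∧ colorResidue u = colorResidue v := by
  rw [modColor_eq, modColor_eq]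
  constructor
  · intro h
    have hq : 0 < q := Nat.pos_of_ne_zero (NeZero.ne q)
    have key : ∀ (a : ℕ) (b : ZMod q), (a * q + b.val) / q = a := fun a b => by
      rw [add_comm, Nat.add_mul_div_right _ _ hq, Nat.div_eq_of_lt b.val_lt, zero_add]
    have h1 : u.1.val / 2 = v.1.val / 2 := by
      rw [← key (u.1.val / 2) (colorResidue u), h, key]
    rw [h1] at h
    exact ⟨h1, ZMod.val_injective q (Nat.add_left_cancel h)⟩
  · rintro ⟨h1, h2⟩
    rw [h1, h2]

/-- Moving up one step flips the parity, and leaves the block exactly when starting at an odd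
coordinate. -/
theorem val_add_one_facts {p : ℕ} (hp4 : 4 ≤ p) (hpe : Even p) (x : ZMod p) :
    (x + 1).val % 2 = 1 - x.val % 2 ∧ ((x + 1).val / 2 = x.val / 2 ↔ x.val % 2 = 0) := by
  obtain ⟨r, rfl⟩ := hpe
  have : NeZero (r + r) := ⟨by omega⟩
  have h1 : (1 : ZMod (r + r)).val = 1 := ZMod.val_one'' (by omega)
  have hx := x.val_lt
  have h := ZMod.val_add x 1
  rw [h1] at h
  rcases Nat.lt_or_ge (x.val + 1) (r + r) with hl | hl
  · rw [Nat.mod_eq_of_lt hl] at h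
    omega
  · have : x.val + 1 = r + r := by omega
    rw [this, Nat.mod_self] at h
    omega

/-- Moving down one step flips the parity, and leaves the block exactly when starting at an even
coordinate. -/
theorem val_sub_one_facts {p : ℕ} (hp4 : 4 ≤ p) (hpe : Even p) (x : ZMod p) :
    (x - 1).val % 2 = 1 - x.val % 2 ∧ ((x - 1).val / 2 = x.val / 2 ↔ x.val % 2 = 1) := by
  have h := val_add_one_facts hp4 hpe (x - 1)
  rw [sub_add_cancel] at h
  omega

section
variable {p q : ℕ}

theorem eq_of_residue_eq (hu : IsUnit (5 : ZMod q)) {u v : ZMod p × ZMod q} (h1 : u.1 = v.1)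
    (h : colorResidue u = colorResidue v) : u = v := by
  refine Prod.ext h1 ?_
  unfold colorResidue at h
  rw [h1] at h
  split_ifs at h
  · exact h
  · exact hu.mul_left_cancel (add_right_cancel h)

/-- The four neighbors of a single cell have distinct colors. -/
theorem nbrs_same [NeZero q] (hp4 : 4 ≤ p) (hpe : Even p) (h8 : 8 ∣ q)
    (u : ZMod p × ZMod q) (d e : Fin 4)
    (h : modColor p q (nbrs u d) = modColor p q (nbrs u e)) : d = e := by
  rw [modColor_eq_iff] at h
  obtain ⟨hb, hc⟩ := h
  obtain ⟨x, y⟩ := u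
  obtain ⟨a1, a2⟩ := val_add_one_facts hp4 hpe x
  obtain ⟨s1, s2⟩ := val_sub_one_facts hp4 hpe x
  replace hc := congrArg (ZMod.castHom h8 (ZMod 8)) hc
  rcases Nat.mod_two_eq_zero_or_one x.val with hx | hx <;> rw [hx] at a1 a2 s1 s2 <;>
  fin_cases d <;> fin_cases e <;> first
  | rfl
  | (exfalso
     simp only [nbrs, Matrix.cons_val, Fin.zero_eta, Fin.mk_one, Fin.reduceFinMk] at hb
     omega)
  | (exfalso
     simp only [nbrs, colorResidue, Matrix.cons_val, Fin.zero_eta, Fin.mk_one, Fin.reduceFinMk,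
       a1, s1, hx, if_true, if_false, map_add, map_sub, map_mul, map_one, map_ofNat, Nat.sub_self,
       Nat.sub_zero, one_ne_zero] at hc
     generalize ZMod.castHom h8 (ZMod 8) y = z at hc
     revert z
     decide)

/-- Two cells of the same color in columns of different parity have no neighbor colors in
common. -/
theorem nbrs_opposite [NeZero q] (hp4 : 4 ≤ p) (hpe : Even p) (h8 : 8 ∣ q)
    (u v : ZMod p × ZMod q) (d e : Fin 4) (hu : u.1.val % 2 = 0) (hv : v.1.val % 2 = 1)
    (huv : modColor p q u = modColor p q v) :
    modColor p q (nbrs u d) ≠ modColor p q (nbrs v e) := by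
  intro h
  rw [modColor_eq_iff] at h huv
  obtain ⟨hb, hc⟩ := h
  obtain ⟨hb', hc'⟩ := huv
  obtain ⟨x, y⟩ := u
  obtain ⟨x', y'⟩ := v
  simp only at hu hv hb'
  obtain ⟨a1, a2⟩ := val_add_one_facts hp4 hpe x
  obtain ⟨s1, s2⟩ := val_sub_one_facts hp4 hpe x
  obtain ⟨a1', a2'⟩ := val_add_one_facts hp4 hpe x'
  obtain ⟨s1', s2'⟩ := val_sub_one_facts hp4 hpe x'
  replace hc := congrArg (ZMod.castHom h8 (ZMod 8)) hc
  replace hc' := congrArg (ZMod.castHom h8 (ZMod 8)) hc'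
  rw [hu] at a1 a2 s1 s2
  rw [hv] at a1' a2' s1' s2'
  simp only [colorResidue, hu, hv, if_true, if_false, one_ne_zero, map_add, map_mul,
    map_ofNat] at hc'
  fin_cases d <;> fin_cases e <;> first
  | (simp only [nbrs, Matrix.cons_val, Fin.zero_eta, Fin.mk_one, Fin.reduceFinMk] at hb
     omega)
  | (simp only [nbrs, colorResidue, Matrix.cons_val, Fin.zero_eta, Fin.mk_one, Fin.reduceFinMk,
       a1, s1, a1', s1', hu, hv, if_true, if_false, map_add, map_sub, map_mul, map_one, map_ofNat,
       Nat.sub_self, Nat.sub_zero, one_ne_zero] at hc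
     rw [hc'] at hc
     generalize ZMod.castHom h8 (ZMod 8) y' = z at hc
     clear hc'
     revert z
     decide)

end

/-- For `p ≥ 4` even and `q ≥ 8` a power of two, the mod-coloring uses each color
in `{0, …, p*q/2 - 1}` exactly twice and is a perfect coloring of the `p × q`
toroidal grid. -/
theorem stmt_3 (p q : ℕ) (hp4 : 4 ≤ p) (hpe : Even p)
    (hq : ∃ m : ℕ, q = 2 ^ m) (hq8 : 8 ≤ q) :
    (∀ c : ℕ, c < p * q / 2 → {u : ZMod p × ZMod q | modColor p q u = c}.ncard = 2) ∧
      IsPerfect (modColor p q) := by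
  have : NeZero q := ⟨by omega⟩
  have : NeZero p := ⟨by omega⟩
  have h8 : 8 ∣ q := by
    obtain ⟨m, rfl⟩ := hq
    have hm : 3 ≤ m := by
      by_contra! hm
      interval_cases m <;> omega
    exact pow_dvd_pow 2 hm
  have h5 : IsUnit (5 : ZMod q) := by
    have : IsUnit ((5 : ℕ) : ZMod q) := by
      rw [ZMod.isUnit_iff_coprime]
      obtain ⟨m, rfl⟩ := hq
      exact Nat.Coprime.pow_right m (by norm_num)
    exact_mod_cast this
  constructor
  · intro c hc
    obtain ⟨r, rfl⟩ := hpe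
    have hq0 : 0 < q := by omega
    have hj : c / q < r := by
      rw [Nat.div_lt_iff_lt_mul hq0]
      have : (r + r) * q / 2 = r * q := by
        rw [← two_mul, mul_assoc, Nat.mul_div_cancel_left _ (by norm_num)]
      omega
    obtain ⟨b, hb⟩ : ∃ b : ZMod q, 5 * b + 2 = (c : ZMod q) := by
      obtain ⟨w, hw⟩ := h5.exists_right_inv
      exact ⟨w * (c - 2), by rw [← mul_assoc, hw]; ring⟩
    have v0 : ((2 * (c / q) : ℕ) : ZMod (r + r)).val = 2 * (c / q) :=
      ZMod.val_natCast_of_lt (by omega)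
    have v1 : ((2 * (c / q) + 1 : ℕ) : ZMod (r + r)).val = 2 * (c / q) + 1 :=
      ZMod.val_natCast_of_lt (by omega)
    set x0 : ZMod (r + r) := ((2 * (c / q) : ℕ) : ZMod (r + r))
    set x1 : ZMod (r + r) := ((2 * (c / q) + 1 : ℕ) : ZMod (r + r))
    have r0 : colorResidue (x0, (c : ZMod q)) = c := by
      simp [colorResidue, v0]
    have r1 : colorResidue (x1, b) = c := by
      simp only [colorResidue, v1]
      rw [if_neg (by omega), hb]
    have c0 : modColor (r + r) q (x0, (c : ZMod q)) = c := by
      rw [modColor_eq, r0, v0, ZMod.val_natCast, Nat.mul_div_cancel_left _ (by norm_num)]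
      exact Nat.div_add_mod' c q
    have hset : {u : ZMod (r + r) × ZMod q | modColor (r + r) q u = c} =
        {(x0, (c : ZMod q)), (x1, b)} := by
      ext u
      have key : modColor (r + r) q u = c ↔
          u.1.val / 2 = c / q ∧ colorResidue u = c := by
        conv_lhs => rw [← c0]
        rw [modColor_eq_iff, r0, v0, Nat.mul_div_cancel_left _ (by norm_num)]
      simp only [Set.mem_ofPred_eq, Set.mem_insert_iff, Set.mem_singleton_iff]
      rw [key]
      constructor
      · rintro ⟨hu1, hu2⟩
        rcases Nat.mod_two_eq_zero_or_one u.1.val with hx | hx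
        · left
          exact eq_of_residue_eq h5 (ZMod.val_injective _ (by simp only [v0]; omega))
            (hu2.trans r0.symm)
        · right
          exact eq_of_residue_eq h5 (ZMod.val_injective _ (by simp only [v1]; omega))
            (hu2.trans r1.symm)
      · rintro (rfl | rfl)
        · exact ⟨by simp only [v0]; omega, r0⟩
        · exact ⟨by simp only [v1]; omega, r1⟩
    rw [hset]
    refine Set.ncard_pair fun h => ?_
    have := congrArg (fun u => u.1.val) h
    simp only [v0, v1] at this
    omega
  · intro u v d e huv hn
    by_cases hpar : u.1.val % 2 = v.1.val % 2
    · obtain ⟨hb, hc⟩ := (modColor_eq_iff u v).1 huv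
      have h : u = v := eq_of_residue_eq h5 (ZMod.val_injective _ (by omega)) hc
      subst h
      exact ⟨rfl, nbrs_same hp4 hpe h8 u d e hn⟩
    · exfalso
      rcases Nat.mod_two_eq_zero_or_one u.1.val with hx | hx
      · exact nbrs_opposite hp4 hpe h8 u v d e hx (by omega) huv hn
      · exact nbrs_opposite hp4 hpe h8 v u e d (by omega) hx huv.symm hn.symm
end

section
/- Let m ≥ 3, let p = 2m, and let q ≥ 1. Partition a set of mq colors into m pairwise disjoint groups g₀, g₁, …, g_{m−1}, each of size q, and for each j with 0 ≤ j < m let (σ₁ʲ, σ₂ʲ) be a nice pair of permutations of g_j. Define a coloring C of the p×q toroidal grid by C(2j, y) = σ₁ʲ(y) and C(2j+1, y) = σ₂ʲ(y) for 0 ≤ j < m and y ∈ ℤ/qℤ (row indices modulo p). Then every color is used exactly twice and C is a perfect coloring of the p×q toroidal grid. -/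
theorem val_add_one_cyclic {n : ℕ} (hn : 2 ≤ n) (x : ZMod n) :
    (x + 1).val = if x.val + 1 = n then 0 else x.val + 1 := by
  have : NeZero n := ⟨by omega⟩
  have : Fact (1 < n) := ⟨by omega⟩
  have hx := ZMod.val_lt x
  rw [ZMod.val_add, ZMod.val_one]
  split_ifs with h
  · rw [h, Nat.mod_self]
  · exact Nat.mod_eq_of_lt (by omega)

theorem val_sub_one_cyclic {n : ℕ} (hn : 2 ≤ n) (x : ZMod n) :
    (x - 1).val = if x.val = 0 then n - 1 else x.val - 1 := by
  have : NeZero n := ⟨by omega⟩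
  have h := val_add_one_cyclic hn (x - 1)
  have hx := ZMod.val_lt (x - 1)
  rw [sub_add_cancel] at h
  split_ifs at h ⊢ <;> omega

/-- Let `m ≥ 3`, `p = 2 m`, `q ≥ 1`.  Partition a set of `m q` colors into `m`
pairwise disjoint groups of size `q` — here group `j` (for `j < m`) is the common
range of the injections `σ₁ j` and `σ₂ j`, these ranges being pairwise disjoint —
and let each `(σ₁ j, σ₂ j)` be a nice pair of permutations of its group.  Color the
`p × q` toroidal grid by `C (2 j, y) = σ₁ j y` and `C (2 j + 1, y) = σ₂ j y`.  Then
every color is used exactly twice and `C` is a perfect coloring. -/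
theorem stmt_4 {κ : Type*} (m q : ℕ) (hm : 3 ≤ m) (hq : 1 ≤ q)
    (σ₁ σ₂ : ℕ → ZMod q → κ)
    (hinj1 : ∀ j, j < m → Function.Injective (σ₁ j))
    (hinj2 : ∀ j, j < m → Function.Injective (σ₂ j))
    (hrange : ∀ j, j < m → Set.range (σ₁ j) = Set.range (σ₂ j))
    (hdisj : ∀ j, j < m → ∀ j', j' < m → j ≠ j' →
      Disjoint (Set.range (σ₁ j)) (Set.range (σ₁ j')))
    (hnice : ∀ j, j < m → IsNicePair (σ₁ j) (σ₂ j))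
    (C : ZMod (2 * m) × ZMod q → κ)
    (hC : ∀ u : ZMod (2 * m) × ZMod q,
      C u = if u.1.val % 2 = 0 then σ₁ (u.1.val / 2) u.2 else σ₂ (u.1.val / 2) u.2) :
    (∀ c ∈ ⋃ j ∈ Set.Iio m, Set.range (σ₁ j), {u | C u = c}.ncard = 2) ∧
      IsPerfect C := by
  have : NeZero (2 * m) := ⟨by omega⟩
  have hlt : ∀ x : ZMod (2 * m), x.val / 2 < m := fun x => by
    have := ZMod.val_lt x
    omega
  have hmem : ∀ u, C u ∈ Set.range (σ₁ (u.1.val / 2)) := by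
    intro u
    rw [hC]
    split_ifs
    · exact ⟨_, rfl⟩
    · rw [hrange _ (hlt _)]
      exact ⟨_, rfl⟩
  have hgroup : ∀ u v, C u = C v → u.1.val / 2 = v.1.val / 2 := by
    intro u v h
    by_contra hne
    exact Set.disjoint_left.1 (hdisj _ (hlt u.1) _ (hlt v.1) hne) (hmem u) (h ▸ hmem v)
  have hcell : ∀ u v, C u = C v → u.1.val % 2 = v.1.val % 2 → u = v := by
    intro u v h hpar
    have hg := hgroup u v h
    have hfst : u.1 = v.1 := ZMod.val_injective _ (by omega)
    rw [hC, hC, ← hpar, ← hg] at h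
    refine Prod.ext hfst ?_
    split_ifs at h
    · exact hinj1 _ (hlt _) h
    · exact hinj2 _ (hlt _) h
  refine ⟨?_, ?_⟩
  · intro c hc
    simp only [Set.mem_iUnion, Set.mem_Iio] at hc
    obtain ⟨j, hj, y, hy⟩ := hc
    obtain ⟨z, hz⟩ : c ∈ Set.range (σ₂ j) := hrange j hj ▸ ⟨y, hy⟩
    have v0 : ((2 * j : ℕ) : ZMod (2 * m)).val = 2 * j := ZMod.val_cast_of_lt (by omega)
    have v1 : ((2 * j + 1 : ℕ) : ZMod (2 * m)).val = 2 * j + 1 := ZMod.val_cast_of_lt (by omega)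
    have c0 : C (((2 * j : ℕ) : ZMod (2 * m)), y) = c := by
      rw [hC]
      simp only [v0]
      rw [if_pos (by omega), show 2 * j / 2 = j by omega, hy]
    have c1 : C (((2 * j + 1 : ℕ) : ZMod (2 * m)), z) = c := by
      rw [hC]
      simp only [v1]
      rw [if_neg (by omega), show (2 * j + 1) / 2 = j by omega, hz]
    have hset : {u | C u = c} =
        {(((2 * j : ℕ) : ZMod (2 * m)), y), (((2 * j + 1 : ℕ) : ZMod (2 * m)), z)} := by
      ext u
      simp only [Set.mem_ofPred_eq, Set.mem_insert_iff, Set.mem_singleton_iff]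
      constructor
      · intro hu
        rcases Nat.mod_two_eq_zero_or_one u.1.val with h | h
        · exact Or.inl (hcell _ _ (hu.trans c0.symm) (by simp only [v0]; omega))
        · exact Or.inr (hcell _ _ (hu.trans c1.symm) (by simp only [v1]; omega))
      · rintro (rfl | rfl)
        exacts [c0, c1]
    rw [hset]
    refine Set.ncard_pair fun h => ?_
    have := congrArg (fun u => u.1.val) h
    simp only [v0, v1] at this
    omega
  · -- In an even row only the neighbor below leaves the group, landing in the previous one.
    have hE : ∀ u : ZMod (2 * m) × ZMod q, u.1.val % 2 = 0 →
        (nbrs u 0).1.val / 2 = (if u.1.val / 2 = 0 then m - 1 else u.1.val / 2 - 1) ∧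
        C (nbrs u 1) = σ₂ (u.1.val / 2) u.2 ∧
        C (nbrs u 2) = σ₁ (u.1.val / 2) (u.2 - 1) ∧
        C (nbrs u 3) = σ₁ (u.1.val / 2) (u.2 + 1) := by
      intro u hu
      have hlu := ZMod.val_lt u.1
      have hup : (u.1 + 1).val = u.1.val + 1 := by
        rw [val_add_one_cyclic (by omega), if_neg (by omega)]
      have hdn := val_sub_one_cyclic (by omega) u.1
      refine ⟨?_, ?_, ?_, ?_⟩
      · change (u.1 - 1).val / 2 = _
        split_ifs at hdn ⊢ <;> omega
      · change C (u.1 + 1, u.2) = _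
        rw [hC, if_neg (by simp only [hup]; omega)]
        simp only [hup]
        congr 1
        omega
      · change C (u.1, u.2 - 1) = _
        rw [hC, if_pos hu]
      · change C (u.1, u.2 + 1) = _
        rw [hC, if_pos hu]
    -- In an odd row only the neighbor above leaves the group, landing in the next one.
    have hO : ∀ u : ZMod (2 * m) × ZMod q, u.1.val % 2 = 1 →
        C (nbrs u 0) = σ₁ (u.1.val / 2) u.2 ∧
        (nbrs u 1).1.val / 2 = (if u.1.val / 2 + 1 = m then 0 else u.1.val / 2 + 1) ∧
        C (nbrs u 2) = σ₂ (u.1.val / 2) (u.2 - 1) ∧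
        C (nbrs u 3) = σ₂ (u.1.val / 2) (u.2 + 1) := by
      intro u hu
      have hlu := ZMod.val_lt u.1
      have hup := val_add_one_cyclic (by omega) u.1
      have hdn : (u.1 - 1).val = u.1.val - 1 := by
        rw [val_sub_one_cyclic (by omega), if_neg (by omega)]
      refine ⟨?_, ?_, ?_, ?_⟩
      · change C (u.1 - 1, u.2) = _
        rw [hC, if_pos (by simp only [hdn]; omega)]
        simp only [hdn]
        congr 1
        omega
      · change (u.1 + 1).val / 2 = _
        split_ifs at hup ⊢ <;> omega
      · change C (u.1, u.2 - 1) = _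
        rw [hC, if_neg (by simp only; omega)]
      · change C (u.1, u.2 + 1) = _
        rw [hC, if_neg (by simp only; omega)]
    -- A cell outside group `j` carries none of the colors of group `j`.
    have hout : ∀ u j, j < m → u.1.val / 2 ≠ j → ∀ y, C u ≠ σ₁ j y ∧ C u ≠ σ₂ j y := by
      intro u j hj hne y
      have hdj := Set.disjoint_left.1 (hdisj _ (hlt u.1) _ hj hne) (hmem u)
      refine ⟨fun h => hdj ⟨y, h.symm⟩, fun h => hdj ?_⟩
      rw [hrange j hj]
      exact ⟨y, h.symm⟩
    have hself : ∀ u, ∀ d e : Fin 4, C (nbrs u d) = C (nbrs u e) → d = e := by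
      intro u d e hn
      have hj := hlt u.1
      rcases Nat.mod_two_eq_zero_or_one u.1.val with hu | hu
      · obtain ⟨h0, h1, h2, h3⟩ := hE u hu
        have ho := hout (nbrs u 0) _ hj (by rw [h0]; split_ifs <;> omega)
        obtain ⟨z, hz⟩ : σ₁ (u.1.val / 2) u.2 ∈ Set.range (σ₂ (u.1.val / 2)) :=
          hrange _ hj ▸ ⟨_, rfl⟩
        have hN := hnice _ hj _ u.2 z rfl hz
        simp only [List.pairwise_cons, List.mem_cons, List.not_mem_nil, or_false,
          forall_eq_or_imp, forall_eq] at hN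
        clear hC hE hO hnice hdisj hrange hcell hgroup hmem hinj1 hinj2 hout
        generalize u.1.val / 2 = j at *
        fin_cases d <;> fin_cases e <;>
          simp only [Fin.zero_eta, Fin.mk_one, Fin.reduceFinMk] at hn ⊢ <;> grind
      · obtain ⟨h0, h1, h2, h3⟩ := hO u hu
        have ho := hout (nbrs u 1) _ hj (by rw [h1]; split_ifs <;> omega)
        obtain ⟨y, hy⟩ : σ₂ (u.1.val / 2) u.2 ∈ Set.range (σ₁ (u.1.val / 2)) :=
          (hrange _ hj).symm ▸ ⟨_, rfl⟩
        have hN := hnice _ hj _ y u.2 hy rfl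
        simp only [List.pairwise_cons, List.mem_cons, List.not_mem_nil, or_false,
          forall_eq_or_imp, forall_eq] at hN
        clear hC hE hO hnice hdisj hrange hcell hgroup hmem hinj1 hinj2 hout
        generalize u.1.val / 2 = j at *
        fin_cases d <;> fin_cases e <;>
          simp only [Fin.zero_eta, Fin.mk_one, Fin.reduceFinMk] at hn ⊢ <;> grind
    -- Two cells of equal color in rows of different parity are the two occurrences of that
    -- color in the array of their group.
    have hcross : ∀ u v, u.1.val % 2 = 0 → v.1.val % 2 = 1 → C u = C v →
        ∀ d e : Fin 4, C (nbrs u d) ≠ C (nbrs v e) := by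
      intro u v hu hv huv d e hn
      have hj := hlt u.1
      have hg := hgroup _ _ huv
      obtain ⟨h0, h1, h2, h3⟩ := hE u hu
      obtain ⟨k0, k1, k2, k3⟩ := hO v hv
      rw [hC, hC, if_pos hu, if_neg (by omega), ← hg] at huv
      rw [← hg] at k0 k1 k2 k3
      -- The previous and the next group differ because `m ≥ 3`.
      have hoo : C (nbrs u 0) ≠ C (nbrs v 1) := fun h => by
        have := hgroup _ _ h
        rw [h0, k1] at this
        split_ifs at this <;> omega
      have ho := hout (nbrs u 0) _ hj (by rw [h0]; split_ifs <;> omega)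
      have ho' := hout (nbrs v 1) _ hj (by rw [k1]; split_ifs <;> omega)
      have hN := hnice _ hj _ u.2 v.2 huv rfl
      simp only [List.pairwise_cons, List.mem_cons, List.not_mem_nil, or_false,
        forall_eq_or_imp, forall_eq] at hN
      clear hC hE hO hnice hdisj hrange hcell hgroup hmem hinj1 hinj2 hself hout h0 k1 hg
      generalize u.1.val / 2 = j at *
      fin_cases d <;> fin_cases e <;>
        simp only [Fin.zero_eta, Fin.mk_one, Fin.reduceFinMk] at hn <;> grind
    intro u v d e huv hn
    by_cases hpar : u.1.val % 2 = v.1.val % 2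
    · obtain rfl := hcell u v huv hpar
      exact ⟨rfl, hself u d e hn⟩
    · exfalso
      rcases Nat.mod_two_eq_zero_or_one u.1.val with hu | hu
      · exact hcross u v hu (by omega) huv d e hn
      · exact hcross v u (by omega) hu huv.symm e d hn.symm
end
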